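/- arXiv:1909.00491 — 2 statements merged into one kernel-verified Lean document; each statement's English description precedes it below -/
import Mathlib

section
/- Let A be a symmetric d×d real matrix, b ∈ ℝ^d, c ≥ 0, λ > 0, and suppose (A, b, c) satisfies the general Cordes condition with parameters λ and ε ∈ (0,1), with S := tr A + c/λ > 0 and Q := ‖A‖_F² + ‖b‖²/(2λ) + (c/λ)² > 0; set γ := S/Q. Then for every d×d real matrix M, every p ∈ ℝ^d and every s ∈ ℝ, (γ·(A : M + b·p − c·s) − (tr M − λ·s))² ≤ (1 − ε)·(‖M‖_F² + 2λ‖p‖² + λ²s²). -/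
/-!
The quantity to be squared is the pairing of `(γA - I, γb, 1 - γc/λ)` with `(M, p, λs)`.
The weighted Cauchy–Schwarz inequality (`cauchy_schwarz_triple`, weight `2λ` on the vector part)
bounds its square by `(‖γA - I‖_F² + γ²‖b‖²/(2λ) + (1 - γc/λ)²)(‖M‖_F² + 2λ‖p‖² + λ²s²)`.
Expanding, the first factor is `γ²Q - 2γS + d + 1`, where `S = tr A + c/λ`. For `γ = S/Q` this
equals `d + 1 - S²/Q`, and the Cordes condition says precisely that `S²/Q ≥ d + ε`.
-/

open MeasureTheory Matrix Finset Bornology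

noncomputable section

/-- Frobenius inner product of two real `d × d` matrices. -/
def frobInner {d : ℕ} (M N : Matrix (Fin d) (Fin d) ℝ) : ℝ :=
  ∑ i, ∑ j, M i j * N i j

/-- Squared Frobenius norm of a real `d × d` matrix. -/
def frobSq {d : ℕ} (M : Matrix (Fin d) (Fin d) ℝ) : ℝ := frobInner M M

/-- Squared Euclidean norm of a vector in `ℝ^d`. -/
def vecSq {d : ℕ} (v : Fin d → ℝ) : ℝ := ∑ i, v i ^ 2

/-- Jacobian matrix of a vector field `ψ : ℝ^d → ℝ^d`, `(jac ψ x) i j = ∂_j ψ_i (x)`. -/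
def jac {d : ℕ} (ψ : (Fin d → ℝ) → (Fin d → ℝ)) (x : Fin d → ℝ) :
    Matrix (Fin d) (Fin d) ℝ :=
  Matrix.of fun i j => fderiv ℝ ψ x (Pi.single j 1) i

/-- Gradient of a scalar field `φ : ℝ^d → ℝ`. -/
def grad' {d : ℕ} (φ : (Fin d → ℝ) → ℝ) (x : Fin d → ℝ) : Fin d → ℝ :=
  fun i => fderiv ℝ φ x (Pi.single i 1)

/-- Divergence of a vector field `ψ : ℝ^d → ℝ^d`. -/
def divg {d : ℕ} (ψ : (Fin d → ℝ) → (Fin d → ℝ)) (x : Fin d → ℝ) : ℝ :=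
  ∑ i, jac ψ x i i

/-- Hessian matrix of a scalar field `u : ℝ^d → ℝ`. -/
def hess {d : ℕ} (u : (Fin d → ℝ) → ℝ) (x : Fin d → ℝ) : Matrix (Fin d) (Fin d) ℝ :=
  jac (grad' u) x

lemma frobInner_smul_sub_one {d : ℕ} (A M : Matrix (Fin d) (Fin d) ℝ) (γ : ℝ) :
    frobInner (γ • A - 1) M = γ * frobInner A M - Matrix.trace M := by
  simp [frobInner, sub_mul, Finset.sum_sub_distrib, Finset.mul_sum, Matrix.one_apply,
    Matrix.trace, mul_assoc]

lemma frobInner_comm {d : ℕ} (A M : Matrix (Fin d) (Fin d) ℝ) :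
    frobInner A M = frobInner M A := by
  simp only [frobInner, mul_comm]

lemma frobSq_smul_sub_one {d : ℕ} (A : Matrix (Fin d) (Fin d) ℝ) (γ : ℝ) :
    frobSq (γ • A - 1) = γ ^ 2 * frobSq A - 2 * γ * Matrix.trace A + d := by
  rw [frobSq, frobInner_smul_sub_one, frobInner_comm, frobInner_smul_sub_one, frobSq,
    Matrix.trace_sub, Matrix.trace_smul, Matrix.trace_one, Fintype.card_fin, smul_eq_mul]
  ring

/-- Cauchy–Schwarz on triples (matrix, vector, scalar), with weight `w` on the vector part. -/
lemma cauchy_schwarz_triple {d : ℕ} (B M : Matrix (Fin d) (Fin d) ℝ) (v p : Fin d → ℝ)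
    (t u w : ℝ) (hw : 0 < w) :
    (frobInner B M + (∑ i, v i * p i) + t * u) ^ 2
      ≤ (frobSq B + vecSq v / w + t ^ 2) * (frobSq M + w * vecSq p + u ^ 2) := by
  have hr : Real.sqrt w ≠ 0 := (Real.sqrt_pos.2 hw).ne'
  have hr2 : Real.sqrt w ^ 2 = w := Real.sq_sqrt hw.le
  -- The weight is split evenly between the two vectors, as factors `1/√w` and `√w`.
  have h := Finset.sum_mul_sq_le_sq_mul_sq
    (Finset.univ : Finset (((Fin d × Fin d) ⊕ Fin d) ⊕ Unit))
    (Sum.elim (Sum.elim (fun x => B x.1 x.2) (fun i => v i / Real.sqrt w)) (fun _ => t))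
    (Sum.elim (Sum.elim (fun x => M x.1 x.2) (fun i => Real.sqrt w * p i)) (fun _ => u))
  have hvp : ∀ i, v i / Real.sqrt w * (Real.sqrt w * p i) = v i * p i := fun i => by
    field_simp
  simp only [Fintype.sum_sum_type, Fintype.sum_prod_type, Sum.elim_inl, Sum.elim_inr,
    Finset.univ_unique, Finset.sum_singleton, hvp, div_pow, mul_pow, hr2,
    ← Finset.sum_div, ← Finset.mul_sum] at h
  simpa only [frobSq, frobInner, vecSq, ← pow_two] using h

/-- **pointwise Cauchy–Schwarz consequence of the general Cordes condition.**
Let `A` be symmetric `d × d`, `b ∈ ℝ^d`, `c ≥ 0`, `λ > 0`, with `S := tr A + c/λ > 0`,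
`Q := ‖A‖_F² + ‖b‖²/(2λ) + (c/λ)² > 0`, `γ := S/Q`, and suppose the general Cordes
condition `Q/S² ≤ 1/(d+ε)` holds with `ε ∈ (0,1)`.  Then for every `d × d` matrix `M`,
`p ∈ ℝ^d` and `s ∈ ℝ`:
`(γ(A : M + b·p − cs) − (tr M − λs))² ≤ (1−ε)(‖M‖_F² + 2λ‖p‖² + λ²s²)`. -/
theorem pointwise_cordes_cauchy_schwarz
    {d : ℕ} (A : Matrix (Fin d) (Fin d) ℝ) (hsymm : A.IsSymm)
    (b : Fin d → ℝ) (c lam ε : ℝ) (hc : 0 ≤ c) (hlam : 0 < lam)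
    (hε : ε ∈ Set.Ioo (0 : ℝ) 1)
    (hS : 0 < Matrix.trace A + c / lam)
    (Q : ℝ) (hQdef : Q = frobSq A + vecSq b / (2 * lam) + (c / lam) ^ 2) (hQ : 0 < Q)
    (γ : ℝ) (hγ : γ = (Matrix.trace A + c / lam) / Q)
    (hcordes : Q / (Matrix.trace A + c / lam) ^ 2 ≤ 1 / ((d : ℝ) + ε))
    (M : Matrix (Fin d) (Fin d) ℝ) (p : Fin d → ℝ) (s : ℝ) :
    (γ * (frobInner A M + (∑ i, b i * p i) - c * s) - (Matrix.trace M - lam * s)) ^ 2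
      ≤ (1 - ε) * (frobSq M + 2 * lam * vecSq p + lam ^ 2 * s ^ 2) := by
  have hd : (0 : ℝ) < d + ε := add_pos_of_nonneg_of_pos d.cast_nonneg hε.1
  set S := Matrix.trace A + c / lam with hSdef
  have hSQ : (d : ℝ) + ε ≤ S ^ 2 / Q := by
    rw [div_le_div_iff₀ (by positivity) hd] at hcordes
    rw [le_div_iff₀ hQ]
    linarith
  have h := cauchy_schwarz_triple (γ • A - 1) M (fun i => γ * b i) p (1 - γ * (c / lam))
    (lam * s) (2 * lam) (by positivity)
  have hb : vecSq (fun i => γ * b i) = γ ^ 2 * vecSq b := by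
    simp only [vecSq, mul_pow, Finset.mul_sum]
  have hbp : ∑ i, γ * b i * p i = γ * ∑ i, b i * p i := by
    simp only [mul_assoc, Finset.mul_sum]
  have hfactor : frobSq (γ • A - 1) + vecSq (fun i => γ * b i) / (2 * lam)
      + (1 - γ * (c / lam)) ^ 2 = d + 1 - S ^ 2 / Q := by
    have hexp : frobSq (γ • A - 1) + vecSq (fun i => γ * b i) / (2 * lam)
        + (1 - γ * (c / lam)) ^ 2 = γ ^ 2 * Q - 2 * γ * S + d + 1 := by
      rw [frobSq_smul_sub_one, hb, hQdef, hSdef]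
      ring
    rw [hexp, hγ]
    field_simp
    ring
  have hlhs : frobInner (γ • A - 1) M + (∑ i, γ * b i * p i)
      + (1 - γ * (c / lam)) * (lam * s)
      = γ * (frobInner A M + (∑ i, b i * p i) - c * s) - (Matrix.trace M - lam * s) := by
    rw [frobInner_smul_sub_one, hbp]
    field_simp
    ring
  rw [hfactor, hlhs, mul_pow lam s] at h
  have hN : 0 ≤ frobSq M + 2 * lam * vecSq p + lam ^ 2 * s ^ 2 := by
    have hM : 0 ≤ frobSq M := by
      unfold frobSq frobInner
      exact Finset.sum_nonneg fun i _ => Finset.sum_nonneg fun j _ => mul_self_nonneg _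
    have hp : 0 ≤ vecSq p := Finset.sum_nonneg fun i _ => sq_nonneg _
    positivity
  exact h.trans (mul_le_mul_of_nonneg_right (by linarith) hN)
end
end

section
/- Let Ω ⊆ ℝ^d be a bounded open set, 0 ≤ θ ≤ 1, let A : Ω → Sym_d(ℝ), b : Ω → ℝ^d, c : Ω → [0,∞) be measurable with ‖A‖_{L^∞} =: α_∞ < ∞, and let φ : ℝ^d → ℝ and ψ : ℝ^d → ℝ^d be smooth with compact support in Ω. Assume the coercivity of â_θ holds for (φ, ψ), i.e. there is C₁ > 0 with ∫_Ω ‖∇φ − ψ‖² + (1/2)∫_Ω ‖Dψ − Dψᵀ‖_F² + ∫_Ω (L_θ(φ, ψ, Dψ))² ≥ C₁·(‖φ‖²_{H¹} + ‖ψ‖²_{H¹}). Then for every measurable Ξ : Ω → Sym_d(ℝ) with ∫_Ω ‖Ξ‖_F² < ∞, ∫_Ω ‖∇φ − ψ‖² + ∫_Ω ‖Dψ − Ξ‖_F² + (1/2)∫_Ω ‖Dψ − Dψᵀ‖_F² + ∫_Ω (L_θ(φ, ψ, Ξ))² ≥ [min(C₁, 4α_∞²)/max(8, 16α_∞²)]·(‖φ‖²_{H¹}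 + ‖ψ‖²_{H¹} + ∫_Ω ‖Ξ‖_F²). -/
/-!
Replacing `Ξ` by `Dψ` in `L_θ` changes it by `A : (Dψ - Ξ)`, which by Cauchy–Schwarz is at most
`α ‖Dψ - Ξ‖_F` almost everywhere. Hence `∫ L_θ(φ,ψ,Dψ)² ≤ 2 ∫ L_θ(φ,ψ,Ξ)² + 2 α² ∫ ‖Dψ - Ξ‖²`
(`integral_sq_le`), and the coercivity of `â_θ` bounds `C₁ (‖φ‖² + ‖ψ‖²)` by the left-hand side
with `2` and `2 α²` as extra factors. Together with `∫ ‖Ξ‖² ≤ 2 ∫ ‖Dψ‖² + 2 ∫ ‖Dψ - Ξ‖²` this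
gives `min(C₁, 4α²) (‖φ‖² + ‖ψ‖² + ‖Ξ‖²) ≤ 3 X + 3 Z + 6 L + 14 α² Y`, where `X`, `Y`, `Z`, `L`
are the four terms of the form `a_θ` (gradient, Jacobian, curl and `L_θ` term), and
`max(8, 16α²)` dominates all these coefficients.

As `b` and `c` are only measurable, `L_θ²` need not be integrable. This is harmless: the difference
`A : (Dψ - Ξ)` is square integrable, so `L_θ(φ,ψ,Dψ)²` and `L_θ(φ,ψ,Ξ)²` are integrable together,
and otherwise both Bochner integrals are `0`.
-/

open MeasureTheory Matrix Finset Bornology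

noncomputable section

/-- The operator `L_θ(φ, ψ, Ξ) := A : Ξ + b·(θψ + (1−θ)∇φ) − cφ` evaluated at `x`. -/
def Ltheta {d : ℕ} (A : (Fin d → ℝ) → Matrix (Fin d) (Fin d) ℝ)
    (b : (Fin d → ℝ) → Fin d → ℝ) (c : (Fin d → ℝ) → ℝ) (θ : ℝ)
    (φ : (Fin d → ℝ) → ℝ) (ψ : (Fin d → ℝ) → (Fin d → ℝ))
    (Ξ : (Fin d → ℝ) → Matrix (Fin d) (Fin d) ℝ) (x : Fin d → ℝ) : ℝ :=
  frobInner (A x) (Ξ x)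
    + (∑ i, b x i * (θ * ψ x i + (1 - θ) * grad' φ x i)) - c x * φ x

lemma frobSq_nonneg {d : ℕ} (M : Matrix (Fin d) (Fin d) ℝ) : 0 ≤ frobSq M := by
  unfold frobSq frobInner
  exact sum_nonneg fun _ _ => sum_nonneg fun _ _ => mul_self_nonneg _

lemma vecSq_nonneg {d : ℕ} (v : Fin d → ℝ) : 0 ≤ vecSq v :=
  sum_nonneg fun _ _ => sq_nonneg _

lemma frobInner_sq_le {d : ℕ} (M N : Matrix (Fin d) (Fin d) ℝ) :
    frobInner M N ^ 2 ≤ frobSq M * frobSq N := by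
  have h := sum_mul_sq_le_sq_mul_sq (univ : Finset (Fin d × Fin d))
    (fun p => M p.1 p.2) (fun p => N p.1 p.2)
  simpa only [frobSq, frobInner, Fintype.sum_prod_type, pow_two] using h

lemma frobSq_sub_le {d : ℕ} (M N : Matrix (Fin d) (Fin d) ℝ) :
    frobSq (M - N) ≤ 2 * frobSq M + 2 * frobSq N := by
  simp only [frobSq, frobInner, mul_sum, ← sum_add_distrib, Matrix.sub_apply]
  refine sum_le_sum fun i _ => sum_le_sum fun j _ => ?_
  nlinarith [sq_nonneg (M i j + N i j)]

/-- The parallelogram estimate for integrals of squares. It needs no integrability of `f ^ 2` or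
`g ^ 2`: since `f - g` is dominated in square by the integrable `k`, they are integrable together,
and if neither is, both integrals are `0`. -/
lemma integral_sq_le {X : Type*} [MeasurableSpace X] {μ : Measure X} {f g k : X → ℝ}
    (hg : AEStronglyMeasurable g μ) (hk : Integrable k μ)
    (hfg : ∀ᵐ x ∂μ, (f x - g x) ^ 2 ≤ k x) :
    ∫ x, f x ^ 2 ∂μ ≤ 2 * (∫ x, g x ^ 2 ∂μ) + 2 * ∫ x, k x ∂μ := by
  by_cases hgi : Integrable (fun x => g x ^ 2) μ
  · rw [← integral_const_mul, ← integral_const_mul,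
      ← integral_add (hgi.const_mul 2) (hk.const_mul 2)]
    refine integral_mono_of_nonneg (.of_forall fun x => sq_nonneg _)
      ((hgi.const_mul 2).add (hk.const_mul 2)) ?_
    filter_upwards [hfg] with x hx
    nlinarith [sq_nonneg (f x - 2 * g x)]
  · have hfi : ¬ Integrable (fun x => f x ^ 2) μ := by
      intro hfi
      refine hgi (((hfi.const_mul 2).add (hk.const_mul 2)).mono' (hg.pow 2) ?_)
      filter_upwards [hfg] with x hx
      rw [Real.norm_of_nonneg (sq_nonneg _)]
      simp only [Pi.add_apply]
      nlinarith [sq_nonneg (2 * f x - g x)]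
    have hk0 : 0 ≤ ∫ x, k x ∂μ :=
      integral_nonneg_of_ae (hfg.mono fun x hx => (sq_nonneg _).trans hx)
    rw [integral_undef hfi, integral_undef hgi]
    linarith

/-- The last, purely arithmetical step; `a` stands for `α²` and `P` for the part `∫ ‖Dψ‖²`
of `H = ‖φ‖² + ‖ψ‖²`. -/
lemma combine_bounds {C a X Y Z L K H P S : ℝ} (hC : 0 < C) (ha : 0 ≤ a) (hX : 0 ≤ X)
    (hY : 0 ≤ Y) (hZ : 0 ≤ Z) (hL : 0 ≤ L) (hH : 0 ≤ H) (hPH : P ≤ H)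
    (hcoer : C * H ≤ X + Z + K) (hK : K ≤ 2 * L + 2 * (a * Y)) (hS : S ≤ 2 * P + 2 * Y) :
    min C (4 * a) / max 8 (16 * a) * (H + S) ≤ X + Y + Z + L := by
  have hM : (0 : ℝ) < max 8 (16 * a) := lt_max_of_lt_left (by norm_num)
  have hm : 0 ≤ min C (4 * a) := le_min hC.le (by positivity)
  rw [div_mul_eq_mul_div, div_le_iff₀ hM]
  have h1 : min C (4 * a) * (H + S) ≤ min C (4 * a) * (3 * H + 2 * Y) :=
    mul_le_mul_of_nonneg_left (by linarith) hm
  have h2 : min C (4 * a) * H ≤ C * H := mul_le_mul_of_nonneg_right (min_le_left _ _) hH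
  have h3 : min C (4 * a) * Y ≤ 4 * a * Y := mul_le_mul_of_nonneg_right (min_le_right _ _) hY
  have h4 : (X + Z + L) * 8 ≤ (X + Z + L) * max 8 (16 * a) :=
    mul_le_mul_of_nonneg_left (le_max_left _ _) (by positivity)
  have h5 : Y * (16 * a) ≤ Y * max 8 (16 * a) :=
    mul_le_mul_of_nonneg_left (le_max_right _ _) hY
  have h6 : 0 ≤ a * Y := mul_nonneg ha hY
  nlinarith

/-- **coercivity of `a_θ` from coercivity of `â_θ`.**
If the coercivity of `â_θ` holds at `(φ, ψ)` with constant `C₁ > 0`, and `αbd` is an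
essential bound for `‖A(x)‖_F` on `Ω`, then for every square-integrable measurable
`Ξ : Ω → Sym_d(ℝ)`:
`∫ ‖∇φ−ψ‖² + ∫ ‖Dψ−Ξ‖_F² + (1/2)∫ ‖Dψ−Dψᵀ‖_F² + ∫ (L_θ(φ,ψ,Ξ))²
  ≥ [min(C₁, 4αbd²)/max(8, 16αbd²)]·(‖φ‖²_{H¹} + ‖ψ‖²_{H¹} + ∫ ‖Ξ‖_F²)`. -/
theorem coercivity_a_theta
    {d : ℕ} (Ω : Set (Fin d → ℝ)) (hΩ : IsOpen Ω) (hbdΩ : IsBounded Ω)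
    (θ : ℝ) (hθ : θ ∈ Set.Icc (0 : ℝ) 1)
    (A : (Fin d → ℝ) → Matrix (Fin d) (Fin d) ℝ)
    (hAmeas : ∀ i j, Measurable fun x => A x i j)
    (hAsymm : ∀ x, (A x).IsSymm)
    (b : (Fin d → ℝ) → Fin d → ℝ) (hbmeas : ∀ i, Measurable fun x => b x i)
    (c : (Fin d → ℝ) → ℝ) (hcmeas : Measurable c) (hc : ∀ x, 0 ≤ c x)
    (αbd : ℝ) (hAbdd : ∀ᵐ x ∂(volume.restrict Ω), Real.sqrt (frobSq (A x)) ≤ αbd)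
    (φ : (Fin d → ℝ) → ℝ) (hφ : ContDiff ℝ (⊤ : ℕ∞) φ)
    (hφsupp : HasCompactSupport φ) (hφsub : tsupport φ ⊆ Ω)
    (ψ : (Fin d → ℝ) → (Fin d → ℝ)) (hψ : ContDiff ℝ (⊤ : ℕ∞) ψ)
    (hψsupp : HasCompactSupport ψ) (hψsub : tsupport ψ ⊆ Ω)
    (C₁ : ℝ) (hC₁ : 0 < C₁)
    (hcoer :
      (∫ x in Ω, vecSq fun i => grad' φ x i - ψ x i)
          + (1 / 2 : ℝ) * (∫ x in Ω, frobSq (jac ψ x - (jac ψ x)ᵀ))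
          + (∫ x in Ω, (Ltheta A b c θ φ ψ (fun y => jac ψ y) x) ^ 2)
        ≥ C₁ * (((∫ x in Ω, (φ x) ^ 2) + ∫ x in Ω, vecSq (grad' φ x))
            + ((∫ x in Ω, vecSq (ψ x)) + ∫ x in Ω, frobSq (jac ψ x)))) :
    ∀ Ξ : (Fin d → ℝ) → Matrix (Fin d) (Fin d) ℝ,
      (∀ i j, Measurable fun x => Ξ x i j) → (∀ x, (Ξ x).IsSymm) →
      Integrable (fun x => frobSq (Ξ x)) (volume.restrict Ω) →
      (∫ x in Ω, vecSq fun i => grad' φ x i - ψ x i)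
          + (∫ x in Ω, frobSq (jac ψ x - Ξ x))
          + (1 / 2 : ℝ) * (∫ x in Ω, frobSq (jac ψ x - (jac ψ x)ᵀ))
          + (∫ x in Ω, (Ltheta A b c θ φ ψ Ξ x) ^ 2)
        ≥ (min C₁ (4 * αbd ^ 2) / max 8 (16 * αbd ^ 2))
          * ((((∫ x in Ω, (φ x) ^ 2) + ∫ x in Ω, vecSq (grad' φ x))
              + ((∫ x in Ω, vecSq (ψ x)) + ∫ x in Ω, frobSq (jac ψ x)))
            + ∫ x in Ω, frobSq (Ξ x)) := by
  intro Ξ hΞmeas _ hΞint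
  have hjc : ∀ i j, Continuous fun x => jac ψ x i j := fun i j => by
    have := hψ.continuous_fderiv (by simp)
    simp only [jac, Matrix.of_apply]
    fun_prop
  have hgc : ∀ i, Continuous fun x => grad' φ x i := fun i => by
    have := hφ.continuous_fderiv (by simp)
    simp only [grad']
    fun_prop
  have hψc : ∀ i, Continuous fun x => ψ x i := fun i =>
    (continuous_apply i).comp hψ.continuous
  have hJint : Integrable (fun x => frobSq (jac ψ x)) (volume.restrict Ω) := by
    refine (Continuous.integrable_of_hasCompactSupport ?_ ?_).restrict
    · simp only [frobSq, frobInner]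
      fun_prop
    · exact (hψsupp.fderiv (𝕜 := ℝ)).comp_left
        (g := fun T : (Fin d → ℝ) →L[ℝ] (Fin d → ℝ) =>
          frobSq (Matrix.of fun i j => T (Pi.single j 1) i)) (by simp [frobSq, frobInner])
  have hYint : Integrable (fun x => frobSq (jac ψ x - Ξ x)) (volume.restrict Ω) := by
    refine ((hJint.const_mul 2).add (hΞint.const_mul 2)).mono' ?_ (.of_forall fun x => ?_)
    · have := fun i j => (hjc i j).measurable
      refine Measurable.aestronglyMeasurable ?_
      simp only [frobSq, frobInner, Matrix.sub_apply]
      fun_prop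
    · rw [Real.norm_of_nonneg (frobSq_nonneg _)]
      exact frobSq_sub_le _ _
  have hS : ∫ x in Ω, frobSq (Ξ x) ≤
      2 * (∫ x in Ω, frobSq (jac ψ x)) + 2 * ∫ x in Ω, frobSq (jac ψ x - Ξ x) := by
    rw [← integral_const_mul, ← integral_const_mul,
      ← integral_add (hJint.const_mul 2) (hYint.const_mul 2)]
    refine integral_mono hΞint ((hJint.const_mul 2).add (hYint.const_mul 2)) fun x => ?_
    have := frobSq_sub_le (jac ψ x) (jac ψ x - Ξ x)
    rwa [sub_sub_cancel] at this
  have hK : ∫ x in Ω, (Ltheta A b c θ φ ψ (fun y => jac ψ y) x) ^ 2 ≤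
      2 * (∫ x in Ω, (Ltheta A b c θ φ ψ Ξ x) ^ 2)
        + 2 * (αbd ^ 2 * ∫ x in Ω, frobSq (jac ψ x - Ξ x)) := by
    rw [← integral_const_mul (αbd ^ 2)]
    refine integral_sq_le ?_ (hYint.const_mul _) ?_
    · have h1 := fun i => (hgc i).measurable
      have h2 := fun i => (hψc i).measurable
      have h3 := hφ.continuous.measurable
      refine Measurable.aestronglyMeasurable ?_
      unfold Ltheta
      simp only [frobInner]
      fun_prop
    · filter_upwards [hAbdd] with x hx
      have hdiff : Ltheta A b c θ φ ψ (fun y => jac ψ y) x - Ltheta A b c θ φ ψ Ξ x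
          = frobInner (A x) (jac ψ x - Ξ x) := by
        simp only [Ltheta, frobInner, Matrix.sub_apply, mul_sub, sum_sub_distrib]
        ring
      rw [hdiff]
      exact (frobInner_sq_le _ _).trans
        (mul_le_mul_of_nonneg_right (Real.sqrt_le_iff.mp hx).2 (frobSq_nonneg _))
  have hφ0 : 0 ≤ ∫ x in Ω, φ x ^ 2 := integral_nonneg fun _ => sq_nonneg _
  have hg0 : 0 ≤ ∫ x in Ω, vecSq (grad' φ x) := integral_nonneg fun _ => vecSq_nonneg _
  have hψ0 : 0 ≤ ∫ x in Ω, vecSq (ψ x) := integral_nonneg fun _ => vecSq_nonneg _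
  have hJ0 : 0 ≤ ∫ x in Ω, frobSq (jac ψ x) := integral_nonneg fun _ => frobSq_nonneg _
  exact combine_bounds hC₁ (sq_nonneg αbd)
    (integral_nonneg fun _ => vecSq_nonneg _) (integral_nonneg fun _ => frobSq_nonneg _)
    (mul_nonneg (by norm_num) (integral_nonneg fun _ => frobSq_nonneg _))
    (integral_nonneg fun _ => sq_nonneg _) (by positivity) (by linarith) hcoer hK hS
end
end
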